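/- Every bounded curvature path containing as a subpath an arc of a circle of radius r ≥ 1 whose length is greater than or equal to πr (i.e., there exist t₁ < t₂ in the domain, a center c ∈ ℝ² and r ≥ 1 with γ(t) lying on the circle of radius r about c for all t ∈ [t₁, t₂] and t₂ − t₁ ≥ πr) is a free path. -/

import Mathlib

noncomputable section

/-- The Euclidean plane. -/
abbrev E2 := EuclideanSpace ℝ (Fin 2)

/-- `γ : [0, s] → ℝ²` is a bounded curvature path (with curvature bound normalized to 1)
with derivative function `γ'`: it is `C¹` (it has the continuous derivative `γ'`),
parametrized by arc length, and piecewise `C²` with `‖γ''‖ ≤ 1` wherever the second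
derivative is defined (off a finite set of break parameters). -/
def IsBCPath (s : ℝ) (γ γ' : ℝ → E2) : Prop :=
  0 ≤ s ∧
  (∀ t ∈ Set.Icc 0 s, HasDerivAt γ (γ' t) t) ∧
  ContinuousOn γ' (Set.Icc 0 s) ∧
  (∀ t ∈ Set.Icc 0 s, ‖γ' t‖ = 1) ∧
  ∃ D : Finset ℝ, ∀ t ∈ Set.Icc 0 s, t ∉ D →
    ∃ a : E2, ‖a‖ ≤ 1 ∧ HasDerivAt γ' a t

/-- Membership in `Γ(x,y)`: a bounded curvature path with endpoint condition
`(x, X)`, `(y, Y)`. -/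
def InGamma (x X y Y : E2) (s : ℝ) (γ γ' : ℝ → E2) : Prop :=
  IsBCPath s γ γ' ∧ γ 0 = x ∧ γ' 0 = X ∧ γ s = y ∧ γ' s = Y

/-- A bounded curvature homotopy: a continuous one-parameter family, indexed by
`p ∈ [0,1]`, of bounded curvature paths `H p : [0, sl p] → ℝ²` (with derivative
`H' p`), all in `Γ(x,y)`.  Continuity is required for the length function and,
jointly, for the family reparametrized on the unit square. -/
def IsBCHomotopy (x X y Y : E2) (sl : ℝ → ℝ) (H H' : ℝ → ℝ → E2) : Prop :=
  (∀ p ∈ Set.Icc (0:ℝ) 1, InGamma x X y Y (sl p) (H p) (H' p)) ∧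
  ContinuousOn sl (Set.Icc 0 1) ∧
  ContinuousOn (fun q : ℝ × ℝ => H q.1 (q.2 * sl q.1))
    (Set.Icc 0 1 ×ˢ Set.Icc 0 1)

/-- Two bounded curvature paths with the same endpoint condition `(x,X),(y,Y)` are
bounded-homotopic if a bounded curvature homotopy deforms one into the other. -/
def BoundedHomotopic (x X y Y : E2) (s₀ : ℝ) (γ γ' : ℝ → E2)
    (s₁ : ℝ) (η η' : ℝ → E2) : Prop :=
  ∃ sl H H', IsBCHomotopy x X y Y sl H H' ∧
    sl 0 = s₀ ∧ sl 1 = s₁ ∧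
    Set.EqOn (H 0) γ (Set.Icc 0 s₀) ∧ Set.EqOn (H' 0) γ' (Set.Icc 0 s₀) ∧
    Set.EqOn (H 1) η (Set.Icc 0 s₁) ∧ Set.EqOn (H' 1) η' (Set.Icc 0 s₁)

/-- A bounded curvature path is free if, for every `L > 0`, it is bounded-homotopic
(within `Γ(x,y)` for its own endpoint condition) to a bounded curvature path of
length at least `L`. -/
def IsFreePath (s : ℝ) (γ γ' : ℝ → E2) : Prop :=
  ∀ L > 0, ∃ s' η η', L ≤ s' ∧
    BoundedHomotopic (γ 0) (γ' 0) (γ s) (γ' s) s γ γ' s' η η'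

/-!
A path with two antiparallel tangent vectors is free: cut it at the two corresponding points and
insert a straight segment of length `ℓ` at each, in the direction of the tangent there. The two
translations cancel, so the endpoint condition is unchanged, and letting `ℓ` grow from `0` gives a
homotopy to arbitrarily long paths. Along a circle of radius `r` the tangent turns by the angle `π`
over a length `π r`, so an arc of that length provides the two antiparallel tangents.
-/

open Set
open scoped NNReal Topology ComplexConjugate

section BaseTime

variable {t₀ l s t : ℝ}

/-- The time change that runs at unit speed, except for a stop of duration `l` at time `t₀`: it
sends `t` to `t` before `t₀`, to `t₀` on `[t₀, t₀ + l]`, and to `t - l` afterwards. -/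
def baseTime (t₀ l t : ℝ) : ℝ := min t (max t₀ (t - l))

theorem baseTime_of_le (h : t ≤ t₀) : baseTime t₀ l t = t :=
  min_eq_left (h.trans (le_max_left _ _))

theorem baseTime_of_mem_Icc (h : t ∈ Icc t₀ (t₀ + l)) : baseTime t₀ l t = t₀ := by
  rw [baseTime, max_eq_left (by linarith [h.2]), min_eq_right h.1]

theorem baseTime_of_add_le (hl : 0 ≤ l) (h : t₀ + l ≤ t) : baseTime t₀ l t = t - l := by
  rw [baseTime, max_eq_right (by linarith), min_eq_right (by linarith)]

theorem baseTime_zero_right : baseTime t₀ 0 t = t := by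
  rw [baseTime, sub_zero, min_eq_left (le_max_right _ _)]

theorem baseTime_eventuallyEq_id (h : t < t₀) : baseTime t₀ l =ᶠ[𝓝 t] id := by
  filter_upwards [Iio_mem_nhds h] with τ hτ using baseTime_of_le hτ.le

theorem baseTime_eventuallyEq_const (h : t ∈ Ioo t₀ (t₀ + l)) :
    baseTime t₀ l =ᶠ[𝓝 t] fun _ ↦ t₀ := by
  filter_upwards [Ioo_mem_nhds h.1 h.2] with τ hτ
    using baseTime_of_mem_Icc (Ioo_subset_Icc_self hτ)

theorem baseTime_eventuallyEq_sub (hl : 0 ≤ l) (h : t₀ + l < t) :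
    baseTime t₀ l =ᶠ[𝓝 t] fun τ ↦ τ - l := by
  filter_upwards [Ioi_mem_nhds h] with τ hτ using baseTime_of_add_le hl hτ.le

theorem mapsTo_baseTime (h₀ : t₀ ∈ Icc 0 s) :
    MapsTo (baseTime t₀ l) (Icc 0 (s + l)) (Icc 0 s) := fun _ ht ↦
  ⟨le_min ht.1 (le_max_of_le_left h₀.1),
    min_le_of_right_le (max_le h₀.2 (sub_le_iff_le_add.2 ht.2))⟩

theorem lipschitzWith_baseTime (t₀ l : ℝ) : LipschitzWith 1 (baseTime t₀ l) := by
  have hshift : LipschitzWith 1 fun t : ℝ ↦ t - l :=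
    LipschitzWith.of_dist_le_mul fun x y ↦ by simp
  unfold baseTime
  simpa using LipschitzWith.id.min (hshift.const_max t₀)

theorem continuous_baseTime_uncurry (t₀ : ℝ) :
    Continuous fun q : ℝ × ℝ ↦ baseTime t₀ q.1 q.2 := by
  unfold baseTime
  fun_prop

end BaseTime

section InsertSegment

variable {E : Type*} [NormedAddCommGroup E] [NormedSpace ℝ E] {t₀ l s t : ℝ}

/-- The path `γ` cut at time `t₀`, with a straight segment of velocity `u` and duration `l`
inserted there and the remainder of `γ` translated by `l • u`. -/
def insertSegment (t₀ l : ℝ) (u : E) (γ : ℝ → E) (t : ℝ) : E :=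
  γ (baseTime t₀ l t) + (t - baseTime t₀ l t) • u

variable {γ γ' : ℝ → E} {u : E}

theorem insertSegment_of_le (h : t ≤ t₀) : insertSegment t₀ l u γ t = γ t := by
  simp [insertSegment, baseTime_of_le h]

theorem insertSegment_of_add_le (hl : 0 ≤ l) (h : t₀ + l ≤ t) :
    insertSegment t₀ l u γ t = γ (t - l) + l • u := by
  simp [insertSegment, baseTime_of_add_le hl h]

theorem insertSegment_zero_right : insertSegment t₀ 0 u γ t = γ t := by
  simp [insertSegment, baseTime_zero_right]

-- `f x - x • v` has derivative `0` at `b t`, and this survives composition with a Lipschitz map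
-- even where `b` is not differentiable.
theorem hasDerivAt_comp_add_sub_smul {b : ℝ → ℝ} {K : ℝ≥0} (hb : LipschitzWith K b) {f : ℝ → E}
    {v : E} (hf : HasDerivAt f v (b t)) :
    HasDerivAt (fun τ ↦ f (b τ) + (τ - b τ) • v) v t := by
  have hbO : (fun τ ↦ b τ - b t) =O[𝓝 t] fun τ ↦ τ - t :=
    .of_bound K (.of_forall fun τ ↦ by simpa only [dist_eq_norm] using hb.dist_le_mul τ t)
  rw [hasDerivAt_iff_isLittleO] at hf ⊢
  refine ((hf.comp_tendsto hb.continuous.continuousAt).trans_isBigO hbO).congr_left fun τ ↦ ?_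
  simp only [Function.comp_apply]
  module

theorem hasDerivAt_insertSegment (hl : 0 ≤ l)
    (h : HasDerivAt γ (γ' (baseTime t₀ l t)) (baseTime t₀ l t)) :
    HasDerivAt (insertSegment t₀ l (γ' t₀) γ) (γ' (baseTime t₀ l t)) t := by
  rcases lt_or_ge t t₀ with hlt | hge
  · rw [baseTime_of_le hlt.le] at h ⊢
    refine h.congr_of_eventuallyEq ?_
    filter_upwards [Iio_mem_nhds hlt] with τ hτ using insertSegment_of_le hτ.le
  rcases le_or_gt t (t₀ + l) with hle | hgt
  · have hbase : baseTime t₀ l t = t₀ := baseTime_of_mem_Icc ⟨hge, hle⟩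
    have hd := hasDerivAt_comp_add_sub_smul (lipschitzWith_baseTime t₀ l) h
    rw [hbase] at hd ⊢
    exact hd
  · rw [baseTime_of_add_le hl hgt.le] at h ⊢
    refine ((h.comp_sub_const t l).add_const (l • γ' t₀)).congr_of_eventuallyEq ?_
    filter_upwards [Ioi_mem_nhds hgt] with τ hτ using insertSegment_of_add_le hl hτ.le

theorem exists_finset_hasDerivAt_comp_baseTime {κ : ℝ} (hκ : 0 ≤ κ) (hl : 0 ≤ l)
    (h₀ : t₀ ∈ Icc 0 s) {f : ℝ → E}
    (hf : ∃ D : Finset ℝ, ∀ t ∈ Icc 0 s, t ∉ D → ∃ a, ‖a‖ ≤ κ ∧ HasDerivAt f a t) :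
    ∃ D : Finset ℝ, ∀ t ∈ Icc 0 (s + l), t ∉ D →
      ∃ a, ‖a‖ ≤ κ ∧ HasDerivAt (f ∘ baseTime t₀ l) a t := by
  classical
  obtain ⟨D, hD⟩ := hf
  refine ⟨D ∪ D.image (· + l) ∪ {t₀, t₀ + l}, fun t ht htD ↦ ?_⟩
  simp only [Finset.mem_union, Finset.mem_image, Finset.mem_insert, Finset.mem_singleton,
    not_or, not_exists, not_and] at htD
  obtain ⟨⟨htD, htDl⟩, hne₀, hne₁⟩ := htD
  have hmem := mapsTo_baseTime h₀ ht
  rcases lt_or_gt_of_ne hne₀ with hlt | hgt₀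
  · rw [baseTime_of_le hlt.le] at hmem
    obtain ⟨a, ha, hda⟩ := hD t hmem htD
    exact ⟨a, ha, hda.congr_of_eventuallyEq ((baseTime_eventuallyEq_id hlt).fun_comp f)⟩
  rcases lt_or_gt_of_ne hne₁ with hlt₁ | hgt
  · exact ⟨0, by simpa using hκ, (hasDerivAt_const t (f t₀)).congr_of_eventuallyEq
      ((baseTime_eventuallyEq_const ⟨hgt₀, hlt₁⟩).fun_comp f)⟩
  · rw [baseTime_of_add_le hl hgt.le] at hmem
    obtain ⟨a, ha, hda⟩ := hD (t - l) hmem fun h ↦ htDl _ h (sub_add_cancel t l)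
    exact ⟨a, ha, (hda.comp_sub_const t l).congr_of_eventuallyEq
      ((baseTime_eventuallyEq_sub hl hgt).fun_comp f)⟩

theorem continuousOn_insertSegment {X : Type*} [TopologicalSpace X] {A : Set X} {ℓ τ : X → ℝ}
    {F : X → ℝ → E} (hℓ : ContinuousOn ℓ A) (hτ : ContinuousOn τ A)
    (hF : ContinuousOn (fun x ↦ F x (baseTime t₀ (ℓ x) (τ x))) A) :
    ContinuousOn (fun x ↦ insertSegment t₀ (ℓ x) u (F x) (τ x)) A :=
  hF.add ((hτ.sub ((continuous_baseTime_uncurry t₀).comp_continuousOn (hℓ.prodMk hτ))).smul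
    continuousOn_const)

/-- The path `γ` with segments of velocities `u` and `-u` and common duration `l` inserted at the
times `t₁` and `t₂`. The later segment is inserted first, so that both times refer to `γ`;
this presupposes `t₁ ≤ t₂`. -/
def insertOppositeSegments (t₁ t₂ l : ℝ) (u : E) (γ : ℝ → E) : ℝ → E :=
  insertSegment t₁ l u (insertSegment t₂ l (-u) γ)

theorem continuousOn_insertOppositeSegments {X : Type*} [TopologicalSpace X] {A : Set X}
    {ℓ τ : X → ℝ} {t₁ t₂ : ℝ} (hγ : ContinuousOn γ (Icc 0 s)) (hℓ : ContinuousOn ℓ A)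
    (hτ : ContinuousOn τ A) (hℓ₀ : ∀ x ∈ A, 0 ≤ ℓ x)
    (hτmem : ∀ x ∈ A, τ x ∈ Icc 0 (s + ℓ x + ℓ x)) (h₁ : t₁ ∈ Icc 0 s) (h₂ : t₂ ∈ Icc 0 s) :
    ContinuousOn (fun x ↦ insertOppositeSegments t₁ t₂ (ℓ x) u γ (τ x)) A := by
  have hbase {t₀ : ℝ} {σ : X → ℝ} (hσ : ContinuousOn σ A) :
      ContinuousOn (fun x ↦ baseTime t₀ (ℓ x) (σ x)) A :=
    (continuous_baseTime_uncurry t₀).comp_continuousOn (hℓ.prodMk hσ)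
  refine continuousOn_insertSegment hℓ hτ (continuousOn_insertSegment hℓ (hbase hτ)
    (hγ.comp (hbase (hbase hτ)) fun x hx ↦ ?_))
  have h₁' : t₁ ∈ Icc 0 (s + ℓ x) := ⟨h₁.1, le_add_of_le_of_nonneg h₁.2 (hℓ₀ x hx)⟩
  exact mapsTo_baseTime h₂ (mapsTo_baseTime h₁' (hτmem x hx))

end InsertSegment

section FreePath

variable {s t₀ t₁ t₂ l : ℝ} {γ γ' : ℝ → E2}

theorem IsBCPath.continuousOn (hγ : IsBCPath s γ γ') : ContinuousOn γ (Icc 0 s) := fun t ht ↦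
  (hγ.2.1 t ht).continuousAt.continuousWithinAt

theorem IsBCPath.insertSegment (hγ : IsBCPath s γ γ') (hl : 0 ≤ l) (h₀ : t₀ ∈ Icc 0 s) :
    IsBCPath (s + l) (insertSegment t₀ l (γ' t₀) γ) (γ' ∘ baseTime t₀ l) := by
  obtain ⟨hs, hderiv, hcont, hunit, hcurv⟩ := hγ
  have hmaps : MapsTo (baseTime t₀ l) (Icc 0 (s + l)) (Icc 0 s) := mapsTo_baseTime h₀
  exact ⟨add_nonneg hs hl, fun t ht ↦ hasDerivAt_insertSegment hl (hderiv _ (hmaps ht)),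
    hcont.comp (lipschitzWith_baseTime t₀ l).continuous.continuousOn hmaps,
    fun t ht ↦ hunit _ (hmaps ht),
    exists_finset_hasDerivAt_comp_baseTime zero_le_one hl h₀ hcurv⟩

theorem inGamma_insertOppositeSegments (hγ : IsBCPath s γ γ') (hl : 0 ≤ l)
    (h₁ : t₁ ∈ Icc 0 s) (h₂ : t₂ ∈ Icc 0 s) (h₁₂ : t₁ ≤ t₂) (hanti : γ' t₂ = -γ' t₁) :
    InGamma (γ 0) (γ' 0) (γ s) (γ' s) (s + l + l) (insertOppositeSegments t₁ t₂ l (γ' t₁) γ)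
      (γ' ∘ baseTime t₂ l ∘ baseTime t₁ l) := by
  have hend₁ : t₁ + l ≤ s + l + l := by linarith [h₁.2]
  have hend₂ : t₂ + l ≤ s + l := by linarith [h₂.2]
  refine ⟨?_, ?_, ?_, ?_, ?_⟩
  · have hbc := (hγ.insertSegment hl h₂).insertSegment hl ⟨h₁.1, h₁.2.trans (by linarith)⟩
    rwa [hanti, Function.comp_apply, baseTime_of_le h₁₂] at hbc
  · rw [insertOppositeSegments, insertSegment_of_le h₁.1, insertSegment_of_le h₂.1]
  · simp only [Function.comp_apply, baseTime_of_le h₁.1, baseTime_of_le h₂.1]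
  · rw [insertOppositeSegments, insertSegment_of_add_le hl hend₁, add_sub_cancel_right,
      insertSegment_of_add_le hl hend₂, add_sub_cancel_right, smul_neg, neg_add_cancel_right]
  · simp only [Function.comp_apply, baseTime_of_add_le hl hend₁, add_sub_cancel_right,
      baseTime_of_add_le hl hend₂]

theorem boundedHomotopic_insertOppositeSegments (hγ : IsBCPath s γ γ') (hl : 0 ≤ l)
    (h₁ : t₁ ∈ Icc 0 s) (h₂ : t₂ ∈ Icc 0 s) (h₁₂ : t₁ ≤ t₂) (hanti : γ' t₂ = -γ' t₁) :
    BoundedHomotopic (γ 0) (γ' 0) (γ s) (γ' s) s γ γ' (s + l + l)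
      (insertOppositeSegments t₁ t₂ l (γ' t₁) γ) (γ' ∘ baseTime t₂ l ∘ baseTime t₁ l) := by
  have hlen {p : ℝ} (hp : p ∈ Icc (0 : ℝ) 1) : 0 ≤ p * l := mul_nonneg hp.1 hl
  refine ⟨fun p ↦ s + p * l + p * l,
    fun p ↦ insertOppositeSegments t₁ t₂ (p * l) (γ' t₁) γ,
    fun p ↦ γ' ∘ baseTime t₂ (p * l) ∘ baseTime t₁ (p * l),
    ⟨fun p hp ↦ inGamma_insertOppositeSegments hγ (hlen hp) h₁ h₂ h₁₂ hanti, by fun_prop, ?_⟩,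
    by simp, by simp, fun t _ ↦ ?_, fun t _ ↦ ?_, fun t _ ↦ ?_, fun t _ ↦ ?_⟩
  · refine continuousOn_insertOppositeSegments hγ.continuousOn (by fun_prop) (by fun_prop)
      (fun q hq ↦ hlen hq.1) (fun q hq ↦ ?_) h₁ h₂
    have htotal : 0 ≤ s + q.1 * l + q.1 * l := by linarith [hγ.1, hlen hq.1]
    exact ⟨mul_nonneg hq.2.1 htotal, mul_le_of_le_one_left htotal hq.2.2⟩
  · simp only [zero_mul, insertOppositeSegments, insertSegment_zero_right]
  · simp only [zero_mul, Function.comp_apply, baseTime_zero_right]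
  · simp only [one_mul]
  · simp only [one_mul]

theorem IsBCPath.isFreePath_of_antiparallel (hγ : IsBCPath s γ γ') (h₁ : t₁ ∈ Icc 0 s)
    (h₂ : t₂ ∈ Icc 0 s) (hanti : γ' t₂ = -γ' t₁) : IsFreePath s γ γ' := by
  wlog h₁₂ : t₁ ≤ t₂ generalizing t₁ t₂
  · exact this h₂ h₁ (by rw [hanti, neg_neg]) (le_of_not_ge h₁₂)
  intro L hL
  exact ⟨s + L + L, _, _, by linarith [hγ.1],
    boundedHomotopic_insertOppositeSegments hγ hL.le h₁ h₂ h₁₂ hanti⟩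

end FreePath

section CircularMotion

theorem inner_eq_zero_of_norm_eq_const {F : Type*} [NormedAddCommGroup F] [InnerProductSpace ℝ F]
    {f : ℝ → F} {f' : F} {S : Set ℝ} {t r : ℝ} (hS : UniqueDiffWithinAt ℝ S t) (ht : t ∈ S)
    (hf : HasDerivWithinAt f f' S t) (hr : ∀ τ ∈ S, ‖f τ‖ = r) : inner ℝ (f t) f' = 0 := by
  have hconst : HasDerivWithinAt (‖f ·‖ ^ 2) 0 S t :=
    (hasDerivWithinAt_const t S (r ^ 2)).congr (fun τ hτ ↦ by simp [hr τ hτ]) (by simp [hr t ht])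
  simpa using hS.eq_deriv _ hf.norm_sq hconst

variable {w w' : ℝ → ℂ} {a b r : ℝ}

theorem eq_mul_I_mul_of_conj_mul_eq {z v : ℂ} {ρ : ℝ} (hz : z ≠ 0)
    (h : conj z * v = ρ * Complex.I) : v = (ρ / ‖z‖ ^ 2 : ℝ) * Complex.I * z := by
  have hnorm : (‖z‖ : ℂ) ≠ 0 := by simpa using hz
  push_cast
  field_simp
  linear_combination z * h - v * Complex.mul_conj' z

-- `conj w * w'` is purely imaginary of constant modulus `r`, so by continuity it is `± r * I`.
theorem exists_velocity_eq_mul_I_mul_of_norm_eq_const (hab : a < b) (hr₀ : 0 < r)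
    (hderiv : ∀ t ∈ Icc a b, HasDerivAt w (w' t) t) (hcont : ContinuousOn w' (Icc a b))
    (hunit : ∀ t ∈ Icc a b, ‖w' t‖ = 1) (hr : ∀ t ∈ Icc a b, ‖w t‖ = r) :
    ∃ ω : ℝ, (ω * r = 1 ∨ ω * r = -1) ∧ ∀ t ∈ Icc a b, w' t = ω * Complex.I * w t := by
  have hre : ∀ t ∈ Icc a b, (conj (w t) * w' t).re = 0 := fun t ht ↦ by
    rw [mul_comm, ← Complex.inner]
    exact inner_eq_zero_of_norm_eq_const (uniqueDiffOn_Icc hab t ht) ht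
      (hderiv t ht).hasDerivWithinAt hr
  have him_sq : ∀ t ∈ Icc a b, (conj (w t) * w' t).im ^ 2 = r ^ 2 := fun t ht ↦ by
    have hnorm : Complex.normSq (conj (w t) * w' t) = r ^ 2 := by
      rw [Complex.normSq_eq_norm_sq, norm_mul, RCLike.norm_conj, hr t ht, hunit t ht, mul_one]
    rw [Complex.normSq_apply, hre t ht] at hnorm
    linarith
  have him_cont : ContinuousOn (fun t ↦ (conj (w t) * w' t).im) (Icc a b) := by
    have hw : ContinuousOn w (Icc a b) := fun t ht ↦
      (hderiv t ht).continuousAt.continuousWithinAt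
    fun_prop
  have hvelocity {ρ : ℝ} (him : ∀ t ∈ Icc a b, (conj (w t) * w' t).im = ρ) :
      ∀ t ∈ Icc a b, w' t = (ρ / r ^ 2 : ℝ) * Complex.I * w t := fun t ht ↦ by
    rw [← hr t ht]
    exact eq_mul_I_mul_of_conj_mul_eq (norm_ne_zero_iff.1 (hr t ht ▸ hr₀.ne'))
      (Complex.ext (by simp [hre t ht]) (by simp [him t ht]))
  rcases isPreconnected_Icc.eq_or_eq_neg_of_sq_eq him_cont continuousOn_const him_sq
    (fun _ ↦ hr₀.ne') with him | him
  · exact ⟨r / r ^ 2, .inl (by field_simp), hvelocity him⟩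
  · exact ⟨-r / r ^ 2, .inr (by field_simp), hvelocity him⟩

theorem eq_exp_mul_of_hasDerivAt_eq_mul {k : ℂ} (hab : a ≤ b)
    (hderiv : ∀ t ∈ Icc a b, HasDerivAt w (k * w t) t) :
    w b = Complex.exp (k * (b - a)) * w a := by
  have hexp (t : ℝ) : HasDerivAt (fun τ : ℝ ↦ Complex.exp (-(k * (τ - a))))
      (Complex.exp (-(k * (t - a))) * -(k * 1)) t :=
    ((((hasDerivAt_id t).ofReal_comp.sub_const (a : ℂ)).const_mul k).neg).cexp
  have hzero : ∀ t ∈ Icc a b,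
      HasDerivAt (fun τ : ℝ ↦ Complex.exp (-(k * (τ - a))) * w τ) 0 t := fun t ht ↦
    ((hexp t).mul (hderiv t ht)).congr_deriv (by ring)
  have hconst := constant_of_has_deriv_right_zero
    (fun t ht ↦ (hzero t ht).continuousAt.continuousWithinAt)
    (fun t ht ↦ (hzero t (Ico_subset_Icc_self ht)).hasDerivWithinAt) b (right_mem_Icc.2 hab)
  simp only [sub_self, mul_zero, neg_zero, Complex.exp_zero, one_mul] at hconst
  rw [← hconst, ← mul_assoc, ← Complex.exp_add, add_neg_cancel, Complex.exp_zero, one_mul]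

theorem velocity_half_circle_eq_neg (hr₀ : 0 < r)
    (hderiv : ∀ t ∈ Icc a (a + Real.pi * r), HasDerivAt w (w' t) t)
    (hcont : ContinuousOn w' (Icc a (a + Real.pi * r)))
    (hunit : ∀ t ∈ Icc a (a + Real.pi * r), ‖w' t‖ = 1)
    (hr : ∀ t ∈ Icc a (a + Real.pi * r), ‖w t‖ = r) : w' (a + Real.pi * r) = -w' a := by
  have hlt : a < a + Real.pi * r := lt_add_of_pos_right a (by positivity)
  obtain ⟨ω, hω, hw'⟩ := exists_velocity_eq_mul_I_mul_of_norm_eq_const hlt hr₀ hderiv hcont hunit hr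
  have hexp : Complex.exp (ω * Complex.I * ((a + Real.pi * r : ℝ) - a)) = -1 := by
    have harg : ω * Complex.I * ((a + Real.pi * r : ℝ) - a)
        = (ω * r : ℝ) * (Real.pi * Complex.I) := by
      push_cast
      ring
    rw [harg]
    rcases hω with h | h <;> simp [h, Complex.exp_neg]
  have hflip : w (a + Real.pi * r) = -w a := by
    rw [eq_exp_mul_of_hasDerivAt_eq_mul (w := w) hlt.le fun t ht ↦ hw' t ht ▸ hderiv t ht, hexp,
      neg_one_mul]
  rw [hw' _ (right_mem_Icc.2 hlt.le), hw' a (left_mem_Icc.2 hlt.le), hflip, mul_neg]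

end CircularMotion

theorem IsBCPath.antiparallel_of_half_circle {s t₁ r : ℝ} {γ γ' : ℝ → E2} {c : E2}
    (hγ : IsBCPath s γ γ') (hr₀ : 0 < r) (hsub : Icc t₁ (t₁ + Real.pi * r) ⊆ Icc 0 s)
    (harc : ∀ t ∈ Icc t₁ (t₁ + Real.pi * r), dist (γ t) c = r) :
    γ' (t₁ + Real.pi * r) = -γ' t₁ := by
  obtain ⟨-, hderiv, hcont, hunit, -⟩ := hγ
  let e : E2 ≃ₗᵢ[ℝ] ℂ := Complex.orthonormalBasisOneI.repr.symm
  apply e.injective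
  rw [map_neg]
  refine velocity_half_circle_eq_neg (w := fun t ↦ e (γ t - c)) (w' := fun t ↦ e (γ' t)) hr₀
    (fun t ht ↦ ?_) (e.continuous.comp_continuousOn (hcont.mono hsub))
    (fun t ht ↦ (e.norm_map _).trans (hunit t (hsub ht)))
    (fun t ht ↦ by rw [e.norm_map, ← dist_eq_norm, harc t ht])
  exact e.toContinuousLinearEquiv.hasFDerivAt.comp_hasDerivAt t
    ((hderiv t (hsub ht)).sub_const c)

/-- Every bounded curvature path containing as a subpath an arc of a
circle of radius `r ≥ 1` of length at least `π r` is a free path. -/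
theorem bc_path_with_long_arc_is_free (s : ℝ) (γ γ' : ℝ → E2)
    (hγ : IsBCPath s γ γ')
    (harc : ∃ t₁ ∈ Set.Icc 0 s, ∃ t₂ ∈ Set.Icc 0 s, ∃ c : E2, ∃ r : ℝ,
      1 ≤ r ∧ t₁ < t₂ ∧ Real.pi * r ≤ t₂ - t₁ ∧
      ∀ t ∈ Set.Icc t₁ t₂, dist (γ t) c = r) :
    IsFreePath s γ γ' := by
  obtain ⟨t₁, h₁, t₂, h₂, c, r, hr, -, hlen, hcircle⟩ := harc
  have hr₀ : 0 < r := one_pos.trans_le hr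
  have hle : t₁ + Real.pi * r ≤ t₂ := by linarith
  have hlt : t₁ < t₁ + Real.pi * r := lt_add_of_pos_right t₁ (by positivity)
  have hsub : Icc t₁ (t₁ + Real.pi * r) ⊆ Icc 0 s := Icc_subset_Icc h₁.1 (hle.trans h₂.2)
  have hanti : γ' (t₁ + Real.pi * r) = -γ' t₁ :=
    hγ.antiparallel_of_half_circle hr₀ hsub fun t ht ↦ hcircle t ⟨ht.1, ht.2.trans hle⟩
  exact hγ.isFreePath_of_antiparallel h₁ (hsub (right_mem_Icc.2 hlt.le)) hanti
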